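/- (Theorem 2.1) The position vector of M satisfies Δ^{II} x = λ x on U for some real λ ≠ 0 if and only if M is part of a sphere centered at the origin, i.e. there is r > 0 with ‖x(u)‖ = r for all u ∈ U (and then necessarily λ = 2/r, n = −x/r); moreover in this case the Gauss curvature K is constant on U. -/

import Mathlib

open Matrix

noncomputable section

/-- The parameter domain `ℝ²`. -/
abbrev Param : Type := Fin 2 → ℝ

/-- Vectors in Euclidean 3-space. -/
abbrev Vec3 : Type := Fin 3 → ℝ

/-- Partial derivative of a vector-valued function in the `i`-th coordinate direction. -/
noncomputable def pd (i : Fin 2) (f : Param → Vec3) (u : Param) : Vec3 :=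
  fderiv ℝ f u (Pi.single i 1)

/-- Partial derivative of a scalar function in the `i`-th coordinate direction. -/
noncomputable def pds (i : Fin 2) (f : Param → ℝ) (u : Param) : ℝ :=
  fderiv ℝ f u (Pi.single i 1)

/-- The Euclidean inner product on `ℝ³`. -/
def dot3 (a b : Vec3) : ℝ := ∑ k, a k * b k

/-- The Euclidean norm on `ℝ³`. -/
noncomputable def norm3 (a : Vec3) : ℝ := Real.sqrt (dot3 a a)

/-- The Gauss map `n = (x_{/1} × x_{/2}) / ‖x_{/1} × x_{/2}‖`. -/
noncomputable def gaussMap (x : Param → Vec3) (u : Param) : Vec3 :=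
  (norm3 (crossProduct (pd 0 x u) (pd 1 x u)))⁻¹ • crossProduct (pd 0 x u) (pd 1 x u)

/-- Components `g_{ij}` of the first fundamental form. -/
noncomputable def fformI (x : Param → Vec3) (u : Param) : Matrix (Fin 2) (Fin 2) ℝ :=
  Matrix.of fun i j => dot3 (pd i x u) (pd j x u)

/-- Components `b_{ij} = ⟨∂²x/∂u^i∂u^j, n⟩` of the second fundamental form. -/
noncomputable def fformII (x : Param → Vec3) (u : Param) : Matrix (Fin 2) (Fin 2) ℝ :=
  Matrix.of fun i j => dot3 (pd i (pd j x) u) (gaussMap x u)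

/-- Components `e_{ij} = ⟨n_{/i}, n_{/j}⟩` of the third fundamental form. -/
noncomputable def fformIII (x : Param → Vec3) (u : Param) : Matrix (Fin 2) (Fin 2) ℝ :=
  Matrix.of fun i j => dot3 (pd i (gaussMap x) u) (pd j (gaussMap x) u)

/-- The Gauss curvature `K = det(b_{ij}) / det(g_{ij})`. -/
noncomputable def gaussCurv (x : Param → Vec3) (u : Param) : ℝ :=
  (fformII x u).det / (fformI x u).det

/-- The mean curvature `H = (1/2) g^{ij} b_{ij}`. -/
noncomputable def meanCurv (x : Param → Vec3) (u : Param) : ℝ :=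
  (1 / 2) * ∑ i, ∑ j, (fformI x u)⁻¹ i j * fformII x u i j

/-- First Beltrami operator `∇^J(φ, ψ) = a^{ij} φ_{/i} ψ_{/j}` with respect to the
fundamental form with component matrix `a`, for scalar `φ` and `ℝ³`-valued `ψ`. -/
noncomputable def beltrami1 (a : Param → Matrix (Fin 2) (Fin 2) ℝ)
    (φ : Param → ℝ) (ψ : Param → Vec3) (u : Param) : Vec3 :=
  ∑ i, ∑ j, ((a u)⁻¹ i j * pds i φ u) • pd j ψ u

/-- Second Beltrami operator
`Δ^J f = −(1/√|det a|) ∂_i (√|det a| a^{ij} ∂_j f)` with respect to the fundamental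
form with component matrix `a`, acting componentwise on `ℝ³`-valued functions. -/
noncomputable def beltrami2 (a : Param → Matrix (Fin 2) (Fin 2) ℝ)
    (f : Param → Vec3) (u : Param) : Vec3 :=
  -((Real.sqrt |(a u).det|)⁻¹ •
    ∑ i, ∑ j, pd i (fun v => (Real.sqrt |(a v).det| * (a v)⁻¹ i j) • pd j f v) u)

/-- `x` is an immersion on `U`: the partial derivatives are linearly independent. -/
def Immersed (x : Param → Vec3) (U : Set Param) : Prop :=
  ∀ u ∈ U, LinearIndependent ℝ ![pd 0 x u, pd 1 x u]

/-- `f` is nonconstant on `U`. -/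
def NonconstOn (f : Param → Vec3) (U : Set Param) : Prop :=
  ¬ ∃ v : Vec3, ∀ u ∈ U, f u = v

/-!
Since `√|det b| b^{ij} x_{/j}` is tangent to the surface, the normal component of `Δ^{II} x` is
`-b^{ij} b_{ij} = -2`. If `Δ^{II} x = λ x`, the support function `⟨x, n⟩` is therefore the constant
`-2/λ`, so `x` is orthogonal to `n_{/1}` and `n_{/2}`; these are independent because `det b ≠ 0`,
and hence `x = -(2/λ) n`.

Conversely, on a sphere of radius `r` ellipticity forces `n = -x/r`, so `b = g/r`, and conformal
invariance in dimension two gives `Δ^{II} x = r Δ^I x`. The fields `√(det g) g^{ij} x_{/j}` are the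
rotated tangent vectors `x_{/2} × n` and `n × x_{/1}`. The second derivatives of `x` cancel in their
divergence, which leaves `Δ^I x = -(2/r) n`.
-/

open Filter Topology

section CrossProduct

variable {F : Type*} [Field F] {a b y n : Fin 3 → F}

lemma exists_smul_cross_eq_of_dotProduct_eq_zero (hab : LinearIndependent F ![a, b])
    (hya : y ⬝ᵥ a = 0) (hyb : y ⬝ᵥ b = 0) : ∃ c : F, c • (a ⨯₃ b) = y := by
  have hcross : (a ⨯₃ b) ⨯₃ y = 0 := by
    rw [cross_cross_eq_smul_sub_smul, dotProduct_comm a, dotProduct_comm b, hya, hyb, zero_smul,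
      zero_smul, sub_zero]
  have hdep : ¬ LinearIndependent F ![a ⨯₃ b, y] := fun h =>
    crossProduct_ne_zero_iff_linearIndependent.2 h hcross
  rw [LinearIndependent.pair_iff' (crossProduct_ne_zero_iff_linearIndependent.2 hab)] at hdep
  push Not at hdep
  exact hdep

lemma eq_dotProduct_smul_of_common_orthogonal (hab : LinearIndependent F ![a, b])
    (hya : y ⬝ᵥ a = 0) (hyb : y ⬝ᵥ b = 0) (hna : n ⬝ᵥ a = 0) (hnb : n ⬝ᵥ b = 0)
    (hn : n ⬝ᵥ n = 1) : y = (y ⬝ᵥ n) • n := by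
  obtain ⟨s, rfl⟩ := exists_smul_cross_eq_of_dotProduct_eq_zero hab hya hyb
  obtain ⟨t, rfl⟩ := exists_smul_cross_eq_of_dotProduct_eq_zero hab hna hnb
  simp only [smul_dotProduct, dotProduct_smul, smul_eq_mul] at hn ⊢
  rw [smul_smul]
  congr 1
  linear_combination (-s) * hn

end CrossProduct

lemma sum_sum_inv_mul_self {ι R : Type*} [Fintype ι] [DecidableEq ι] [CommRing R]
    {A : Matrix ι ι R} (hA : A.IsSymm) (hdet : IsUnit A.det) :
    ∑ i, ∑ j, A⁻¹ i j * A i j = Fintype.card ι := by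
  calc ∑ i, ∑ j, A⁻¹ i j * A i j = (A⁻¹ * A).trace := by
        simp only [trace, diag_apply, mul_apply, hA.apply]
    _ = Fintype.card ι := by rw [nonsing_inv_mul _ hdet, trace_one]

section EuclideanNorm

lemma dot3_eq_dotProduct (a b : Vec3) : dot3 a b = a ⬝ᵥ b := rfl

lemma norm3_nonneg (a : Vec3) : 0 ≤ norm3 a := Real.sqrt_nonneg _

lemma norm3_sq (a : Vec3) : norm3 a ^ 2 = a ⬝ᵥ a :=
  Real.sq_sqrt (by simpa [dot3_eq_dotProduct] using dotProduct_star_self_nonneg a)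

lemma norm3_ne_zero {a : Vec3} (ha : a ≠ 0) : norm3 a ≠ 0 := fun h =>
  ha (dotProduct_self_eq_zero.1 (by rw [← norm3_sq, h, zero_pow two_ne_zero]))

end EuclideanNorm

section Bilinear

variable {E V W G : Type*} [NormedAddCommGroup E] [NormedSpace ℝ E]
  [NormedAddCommGroup V] [NormedSpace ℝ V] [FiniteDimensional ℝ V]
  [NormedAddCommGroup W] [NormedSpace ℝ W] [FiniteDimensional ℝ W]
  [NormedAddCommGroup G] [NormedSpace ℝ G]
  (B : V →ₗ[ℝ] W →ₗ[ℝ] G) {f : E → V} {g : E → W} {u : E}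

lemma differentiableAt_bilin (hf : DifferentiableAt ℝ f u) (hg : DifferentiableAt ℝ g u) :
    DifferentiableAt ℝ (fun v => B (f v) (g v)) u :=
  (B.toContinuousBilinearMap.hasFDerivAt_of_bilinear hf.hasFDerivAt
    hg.hasFDerivAt).differentiableAt

lemma fderiv_bilin_apply (hf : DifferentiableAt ℝ f u) (hg : DifferentiableAt ℝ g u) (h : E) :
    fderiv ℝ (fun v => B (f v) (g v)) u h =
      B (fderiv ℝ f u h) (g u) + B (f u) (fderiv ℝ g u h) := by
  change fderiv ℝ (fun v => B.toContinuousBilinearMap (f v) (g v)) u h = _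
  rw [B.toContinuousBilinearMap.fderiv_of_bilinear hf hg, add_comm]
  simp

end Bilinear

section PartialDerivative

variable {f g : Param → Vec3} {u : Param} {i j : Fin 2}

lemma pd_congr_of_eventuallyEq (h : f =ᶠ[𝓝 u] g) : pd i f u = pd i g u := by
  rw [pd, pd, h.fderiv_eq]

lemma pd_const_smul (c : ℝ) (hf : DifferentiableAt ℝ f u) :
    pd i (fun v => c • f v) u = c • pd i f u := by
  simp [pd, fderiv_fun_const_smul hf]

lemma pd_sum {ι : Type*} (s : Finset ι) {f : ι → Param → Vec3}
    (hf : ∀ k ∈ s, DifferentiableAt ℝ (f k) u) :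
    pd i (fun v => ∑ k ∈ s, f k v) u = ∑ k ∈ s, pd i (f k) u := by
  simp [pd, fderiv_fun_sum hf]

lemma contDiffAt_pd {m n : WithTop ℕ∞} (hf : ContDiffAt ℝ n f u) (hmn : m + 1 ≤ n) :
    ContDiffAt ℝ m (pd i f) u :=
  (hf.fderiv_right hmn).clm_apply contDiffAt_const

lemma differentiableAt_pd (hf : ContDiffAt ℝ 2 f u) : DifferentiableAt ℝ (pd i f) u :=
  (contDiffAt_pd hf one_add_one_eq_two.le).differentiableAt one_ne_zero

lemma pd_comm (hf : ContDiffAt ℝ 2 f u) : pd i (pd j f) u = pd j (pd i f) u := by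
  have hdiff : DifferentiableAt ℝ (fderiv ℝ f) u :=
    (hf.fderiv_right one_add_one_eq_two.le).differentiableAt one_ne_zero
  have pd_pd (k l : Fin 2) :
      pd k (pd l f) u = fderiv ℝ (fderiv ℝ f) u (Pi.single k 1) (Pi.single l 1) := by
    change fderiv ℝ (fun v => fderiv ℝ f v (Pi.single l 1)) u (Pi.single k 1) = _
    simp [fderiv_clm_apply hdiff (differentiableAt_const _)]
  rw [pd_pd, pd_pd]
  exact hf.isSymmSndFDerivAt (by simp) _ _

lemma differentiableAt_dotProduct (hf : DifferentiableAt ℝ f u) (hg : DifferentiableAt ℝ g u) :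
    DifferentiableAt ℝ (fun v => f v ⬝ᵥ g v) u :=
  differentiableAt_bilin (dotProductBilin ℝ ℝ) hf hg

lemma differentiableAt_cross (hf : DifferentiableAt ℝ f u) (hg : DifferentiableAt ℝ g u) :
    DifferentiableAt ℝ (fun v => f v ⨯₃ g v) u :=
  differentiableAt_bilin crossProduct hf hg

lemma pd_cross (hf : DifferentiableAt ℝ f u) (hg : DifferentiableAt ℝ g u) :
    pd i (fun v => f v ⨯₃ g v) u = pd i f u ⨯₃ g u + f u ⨯₃ pd i g u :=
  fderiv_bilin_apply crossProduct hf hg _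

lemma pd_dotProduct_eq_neg_of_eventually_const (hf : DifferentiableAt ℝ f u)
    (hg : DifferentiableAt ℝ g u) {c : ℝ} (h : ∀ᶠ v in 𝓝 u, f v ⬝ᵥ g v = c) :
    pd i f u ⬝ᵥ g u = -(f u ⬝ᵥ pd i g u) := by
  have hzero : fderiv ℝ (fun v => f v ⬝ᵥ g v) u (Pi.single i 1) = 0 := by
    rw [EventuallyEq.fderiv_eq h, fderiv_const_apply, _root_.zero_apply]
  exact eq_neg_of_add_eq_zero_left
    ((fderiv_bilin_apply (dotProductBilin ℝ ℝ) hf hg _).symm.trans hzero)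

lemma dotProduct_pd_self_of_eventually_const (hf : DifferentiableAt ℝ f u) {c : ℝ}
    (h : ∀ᶠ v in 𝓝 u, f v ⬝ᵥ f v = c) : f u ⬝ᵥ pd i f u = 0 := by
  have := pd_dotProduct_eq_neg_of_eventually_const (i := i) hf hf h
  rw [dotProduct_comm] at this
  linarith

end PartialDerivative

section InvDensity

/-- The densitized inverse `√|det A| A⁻¹` of a component matrix, i.e. the coefficients
`√|det a| a^{ij}` under the derivative in `beltrami2`. -/
def invDensity (A : Matrix (Fin 2) (Fin 2) ℝ) : Matrix (Fin 2) (Fin 2) ℝ :=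
  √|A.det| • A⁻¹

lemma invDensity_eq (A : Matrix (Fin 2) (Fin 2) ℝ) :
    invDensity A = (√|A.det| * A.det⁻¹) • A.adjugate := by
  rw [invDensity, inv_def, Ring.inverse_eq_inv', smul_smul]

lemma invDensity_of_det_nonneg {A : Matrix (Fin 2) (Fin 2) ℝ} (hA : 0 ≤ A.det) :
    invDensity A = (√A.det)⁻¹ • A.adjugate := by
  rw [invDensity_eq, abs_of_nonneg hA, ← div_eq_mul_inv, Real.sqrt_div_self]

lemma sqrt_abs_det_smul {c : ℝ} (hc : 0 ≤ c) (A : Matrix (Fin 2) (Fin 2) ℝ) :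
    √|(c • A).det| = c * √|A.det| := by
  rw [det_smul, Fintype.card_fin, abs_mul, abs_pow, sq_abs, Real.sqrt_mul (sq_nonneg c),
    Real.sqrt_sq hc]

-- Special to dimension two, where the density weight `c` cancels the factor `c⁻¹` of the inverse.
lemma invDensity_smul {c : ℝ} (hc : 0 < c) (A : Matrix (Fin 2) (Fin 2) ℝ) :
    invDensity (c • A) = invDensity A := by
  rw [invDensity_eq, invDensity_eq, sqrt_abs_det_smul hc.le, det_smul, adjugate_smul, smul_smul,
    Fintype.card_fin, pow_one, mul_inv]
  congr 1
  field_simp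

lemma differentiableAt_invDensity {E : Type*} [NormedAddCommGroup E] [NormedSpace ℝ E]
    {a : E → Matrix (Fin 2) (Fin 2) ℝ} {u : E}
    (ha : ∀ i j, DifferentiableAt ℝ (fun v => a v i j) u) (hdet : (a u).det ≠ 0) (i j : Fin 2) :
    DifferentiableAt ℝ (fun v => invDensity (a v) i j) u := by
  have hdet_diff : DifferentiableAt ℝ (fun v => (a v).det) u := by
    simp only [det_fin_two]
    fun_prop
  have hadj : DifferentiableAt ℝ (fun v => (a v).adjugate i j) u := by
    simp only [adjugate_fin_two]
    fin_cases i <;> fin_cases j <;> simp [ha]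
  simp only [invDensity_eq, Matrix.smul_apply, smul_eq_mul]
  exact (((hdet_diff.abs hdet).sqrt (abs_ne_zero.2 hdet)).mul (hdet_diff.inv hdet)).mul hadj

end InvDensity

section Beltrami

variable {a a' : Param → Matrix (Fin 2) (Fin 2) ℝ} {f : Param → Vec3} {u : Param}

lemma beltrami2_eq_invDensity (a : Param → Matrix (Fin 2) (Fin 2) ℝ) (f : Param → Vec3)
    (u : Param) :
    beltrami2 a f u =
      -((√|(a u).det|)⁻¹ • ∑ i, ∑ j, pd i (fun v => invDensity (a v) i j • pd j f v) u) :=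
  rfl

lemma beltrami2_congr_of_eventuallyEq (h : a =ᶠ[𝓝 u] a') :
    beltrami2 a f u = beltrami2 a' f u := by
  have hpd (i j : Fin 2) : pd i (fun v => invDensity (a v) i j • pd j f v) u =
      pd i (fun v => invDensity (a' v) i j • pd j f v) u :=
    pd_congr_of_eventuallyEq (h.mono fun v hv => by simp only [hv])
  simp only [beltrami2_eq_invDensity, hpd, h.eq_of_nhds]

lemma beltrami2_const_smul {c : ℝ} (hc : 0 < c) :
    beltrami2 (fun v => c • a v) f u = c⁻¹ • beltrami2 a f u := by
  simp only [beltrami2_eq_invDensity, invDensity_smul hc, sqrt_abs_det_smul hc.le, mul_inv,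
    mul_smul, smul_neg]

end Beltrami

section Surface

variable {x : Param → Vec3} {u : Param}

lemma gaussMap_dotProduct_self (hind : LinearIndependent ℝ ![pd 0 x u, pd 1 x u]) :
    gaussMap x u ⬝ᵥ gaussMap x u = 1 := by
  have hne := norm3_ne_zero (crossProduct_ne_zero_iff_linearIndependent.2 hind)
  rw [gaussMap, smul_dotProduct, dotProduct_smul, ← norm3_sq, smul_eq_mul, smul_eq_mul]
  field_simp

lemma gaussMap_dotProduct_pd (i : Fin 2) : gaussMap x u ⬝ᵥ pd i x u = 0 := by
  rw [gaussMap, smul_dotProduct, dotProduct_comm]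
  fin_cases i <;> simp

lemma eventually_linearIndependent_pd (hx : ContDiffAt ℝ 2 x u)
    (hind : LinearIndependent ℝ ![pd 0 x u, pd 1 x u]) :
    ∀ᶠ v in 𝓝 u, LinearIndependent ℝ ![pd 0 x v, pd 1 x v] := by
  simp only [← crossProduct_ne_zero_iff_linearIndependent] at hind ⊢
  exact (differentiableAt_cross (differentiableAt_pd hx)
    (differentiableAt_pd hx)).continuousAt.eventually_ne hind

lemma differentiableAt_gaussMap (hx : ContDiffAt ℝ 2 x u)
    (hind : LinearIndependent ℝ ![pd 0 x u, pd 1 x u]) : DifferentiableAt ℝ (gaussMap x) u := by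
  have hcross : DifferentiableAt ℝ (fun v => pd 0 x v ⨯₃ pd 1 x v) u :=
    differentiableAt_cross (differentiableAt_pd hx) (differentiableAt_pd hx)
  have hne := crossProduct_ne_zero_iff_linearIndependent.2 hind
  have hnorm : DifferentiableAt ℝ (fun v => norm3 (pd 0 x v ⨯₃ pd 1 x v)) u :=
    (differentiableAt_dotProduct hcross hcross).sqrt (dotProduct_self_eq_zero.not.2 hne)
  exact (hnorm.inv (norm3_ne_zero hne)).smul hcross

lemma gaussMap_dotProduct_pd_gaussMap (hx : ContDiffAt ℝ 2 x u)
    (hind : LinearIndependent ℝ ![pd 0 x u, pd 1 x u]) (i : Fin 2) :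
    gaussMap x u ⬝ᵥ pd i (gaussMap x) u = 0 :=
  dotProduct_pd_self_of_eventually_const (differentiableAt_gaussMap hx hind)
    ((eventually_linearIndependent_pd hx hind).mono fun _ => gaussMap_dotProduct_self)

lemma fformI_apply (i j : Fin 2) : fformI x u i j = pd i x u ⬝ᵥ pd j x u := rfl

lemma fformII_apply (i j : Fin 2) : fformII x u i j = pd i (pd j x) u ⬝ᵥ gaussMap x u := rfl

lemma fformII_eq_neg_pd_dotProduct_pd_gaussMap (hx : ContDiffAt ℝ 2 x u)
    (hind : LinearIndependent ℝ ![pd 0 x u, pd 1 x u]) (i j : Fin 2) :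
    fformII x u i j = -(pd j x u ⬝ᵥ pd i (gaussMap x) u) :=
  pd_dotProduct_eq_neg_of_eventually_const (differentiableAt_pd hx)
    (differentiableAt_gaussMap hx hind)
    (.of_forall fun v => by rw [dotProduct_comm, gaussMap_dotProduct_pd])

lemma differentiableAt_fformI (hx : ContDiffAt ℝ 2 x u) (i j : Fin 2) :
    DifferentiableAt ℝ (fun v => fformI x v i j) u :=
  differentiableAt_dotProduct (differentiableAt_pd hx) (differentiableAt_pd hx)

lemma differentiableAt_fformII (hx : ContDiffAt ℝ 3 x u)
    (hind : LinearIndependent ℝ ![pd 0 x u, pd 1 x u]) (i j : Fin 2) :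
    DifferentiableAt ℝ (fun v => fformII x v i j) u :=
  differentiableAt_dotProduct (differentiableAt_pd (contDiffAt_pd hx two_add_one_eq_three.le))
    (differentiableAt_gaussMap (hx.of_le (by norm_num)) hind)

lemma det_fformI : (fformI x u).det = norm3 (pd 0 x u ⨯₃ pd 1 x u) ^ 2 := by
  rw [norm3_sq, cross_dot_cross, det_fin_two]
  simp only [fformI_apply]

lemma det_fformI_pos (hind : LinearIndependent ℝ ![pd 0 x u, pd 1 x u]) :
    0 < (fformI x u).det := by
  have := norm3_ne_zero (crossProduct_ne_zero_iff_linearIndependent.2 hind)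
  rw [det_fformI]
  positivity

lemma sqrt_det_fformI : √(fformI x u).det = norm3 (pd 0 x u ⨯₃ pd 1 x u) := by
  rw [det_fformI, Real.sqrt_sq (norm3_nonneg _)]

lemma det_fformII (hx : ContDiffAt ℝ 2 x u)
    (hind : LinearIndependent ℝ ![pd 0 x u, pd 1 x u]) :
    (fformII x u).det =
      (pd 0 x u ⨯₃ pd 1 x u) ⬝ᵥ (pd 0 (gaussMap x) u ⨯₃ pd 1 (gaussMap x) u) := by
  rw [det_fin_two, cross_dot_cross]
  simp only [fformII_eq_neg_pd_dotProduct_pd_gaussMap hx hind]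
  ring

lemma linearIndependent_pd_gaussMap (hx : ContDiffAt ℝ 2 x u)
    (hind : LinearIndependent ℝ ![pd 0 x u, pd 1 x u]) (hdet : (fformII x u).det ≠ 0) :
    LinearIndependent ℝ ![pd 0 (gaussMap x) u, pd 1 (gaussMap x) u] := by
  rw [← crossProduct_ne_zero_iff_linearIndependent]
  intro hzero
  rw [det_fformII hx hind, hzero, dotProduct_zero] at hdet
  exact hdet rfl

lemma beltrami2_dotProduct_gaussMap {a : Param → Matrix (Fin 2) (Fin 2) ℝ}
    (ha : ∀ i j, DifferentiableAt ℝ (fun v => a v i j) u) (hdet : (a u).det ≠ 0)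
    (hx : ContDiffAt ℝ 2 x u) (hind : LinearIndependent ℝ ![pd 0 x u, pd 1 x u]) :
    beltrami2 a x u ⬝ᵥ gaussMap x u = -∑ i, ∑ j, (a u)⁻¹ i j * fformII x u i j := by
  have hflux (i j : Fin 2) : pd i (fun v => invDensity (a v) i j • pd j x v) u ⬝ᵥ gaussMap x u =
      √|(a u).det| * ((a u)⁻¹ i j * fformII x u i j) := by
    have htangent (v : Param) : (invDensity (a v) i j • pd j x v) ⬝ᵥ gaussMap x v = 0 := by
      rw [smul_dotProduct, dotProduct_comm, gaussMap_dotProduct_pd, smul_zero]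
    rw [pd_dotProduct_eq_neg_of_eventually_const
      ((differentiableAt_invDensity ha hdet i j).fun_smul (differentiableAt_pd hx))
      (differentiableAt_gaussMap hx hind) (.of_forall htangent), smul_dotProduct,
      fformII_eq_neg_pd_dotProduct_pd_gaussMap hx hind, invDensity, Matrix.smul_apply,
      smul_eq_mul, smul_eq_mul]
    ring
  have hsqrt : √|(a u).det| ≠ 0 := Real.sqrt_ne_zero'.2 (abs_pos.2 hdet)
  simp only [beltrami2_eq_invDensity, neg_dotProduct, smul_dotProduct, sum_dotProduct, hflux,
    ← Finset.mul_sum, smul_eq_mul, inv_mul_cancel_left₀ hsqrt]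

lemma beltrami2_fformII_dotProduct_gaussMap (hx : ContDiffAt ℝ 3 x u)
    (hind : LinearIndependent ℝ ![pd 0 x u, pd 1 x u]) (hdet : (fformII x u).det ≠ 0) :
    beltrami2 (fformII x) x u ⬝ᵥ gaussMap x u = -2 := by
  have hx₂ : ContDiffAt ℝ 2 x u := hx.of_le (by norm_num)
  have hsymm : (fformII x u).IsSymm := .ext fun i j => by
    rw [fformII_apply, fformII_apply, pd_comm hx₂]
  rw [beltrami2_dotProduct_gaussMap (differentiableAt_fformII hx hind) hdet hx₂ hind,
    sum_sum_inv_mul_self hsymm hdet.isUnit, Fintype.card_fin, Nat.cast_ofNat]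

lemma eq_smul_gaussMap_of_dotProduct_gaussMap_const (hx : ContDiffAt ℝ 2 x u)
    (hind : LinearIndependent ℝ ![pd 0 x u, pd 1 x u]) (hdet : (fformII x u).det ≠ 0) {c : ℝ}
    (hsupport : ∀ᶠ v in 𝓝 u, x v ⬝ᵥ gaussMap x v = c) : x u = c • gaussMap x u := by
  have hpd (i : Fin 2) : x u ⬝ᵥ pd i (gaussMap x) u = 0 := by
    have h := pd_dotProduct_eq_neg_of_eventually_const (i := i) (hx.differentiableAt two_ne_zero)
      (differentiableAt_gaussMap hx hind) hsupport
    rwa [dotProduct_comm, gaussMap_dotProduct_pd, zero_eq_neg] at h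
  rw [← hsupport.self_of_nhds]
  exact eq_dotProduct_smul_of_common_orthogonal (linearIndependent_pd_gaussMap hx hind hdet)
    (hpd 0) (hpd 1) (gaussMap_dotProduct_pd_gaussMap hx hind 0)
    (gaussMap_dotProduct_pd_gaussMap hx hind 1) (gaussMap_dotProduct_self hind)

-- At singular points of `x` both sides vanish, because `gaussMap` and `invDensity` are `0` there.
lemma sum_invDensity_fformI_zero_smul_pd :
    ∑ j, invDensity (fformI x u) 0 j • pd j x u = pd 1 x u ⨯₃ gaussMap x u := by
  have hdet : 0 ≤ (fformI x u).det := det_fformI (x := x) (u := u) ▸ sq_nonneg _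
  rw [invDensity_of_det_nonneg hdet, sqrt_det_fformI, gaussMap, map_smul,
    cross_cross_eq_smul_sub_smul', adjugate_fin_two]
  simp [fformI_apply, mul_smul, sub_eq_add_neg]

lemma sum_invDensity_fformI_one_smul_pd :
    ∑ j, invDensity (fformI x u) 1 j • pd j x u = gaussMap x u ⨯₃ pd 0 x u := by
  have hdet : 0 ≤ (fformI x u).det := det_fformI (x := x) (u := u) ▸ sq_nonneg _
  rw [invDensity_of_det_nonneg hdet, sqrt_det_fformI, gaussMap, map_smul, LinearMap.smul_apply,
    cross_cross_eq_smul_sub_smul, adjugate_fin_two]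
  simp [fformI_apply, mul_smul, sub_eq_add_neg, add_comm]

lemma beltrami2_fformI_self (hx : ContDiffAt ℝ 2 x u)
    (hind : LinearIndependent ℝ ![pd 0 x u, pd 1 x u]) :
    beltrami2 (fformI x) x u = -((norm3 (pd 0 x u ⨯₃ pd 1 x u))⁻¹ •
      (pd 1 x u ⨯₃ pd 0 (gaussMap x) u + pd 1 (gaussMap x) u ⨯₃ pd 0 x u)) := by
  have hdet := det_fformI_pos hind
  have hn := differentiableAt_gaussMap hx hind
  have hsum (i : Fin 2) :
      ∑ j, pd i (fun v => invDensity (fformI x v) i j • pd j x v) u =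
        pd i (fun v => ∑ j, invDensity (fformI x v) i j • pd j x v) u :=
    (pd_sum _ fun j _ => (differentiableAt_invDensity (differentiableAt_fformI hx) hdet.ne'
      i j).smul (differentiableAt_pd hx)).symm
  have hcancel : pd 0 (pd 1 x) u ⨯₃ gaussMap x u + gaussMap x u ⨯₃ pd 1 (pd 0 x) u = 0 := by
    rw [pd_comm hx, cross_anticomm']
  rw [beltrami2_eq_invDensity, Fin.sum_univ_two, hsum, hsum, abs_of_pos hdet, sqrt_det_fformI]
  simp only [sum_invDensity_fformI_zero_smul_pd, sum_invDensity_fformI_one_smul_pd,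
    pd_cross (differentiableAt_pd hx) hn, pd_cross hn (differentiableAt_pd hx)]
  congr 2
  linear_combination hcancel

end Surface

section Sphere

variable {x : Param → Vec3} {u : Param} {c r : ℝ}

lemma pd_gaussMap_of_gaussMap_eq (hx : DifferentiableAt ℝ x u)
    (hn : ∀ᶠ v in 𝓝 u, gaussMap x v = -(c • x v)) (i : Fin 2) :
    pd i (gaussMap x) u = -(c • pd i x u) := by
  simp only [← neg_smul] at hn ⊢
  rw [pd_congr_of_eventuallyEq hn, pd_const_smul _ hx]

lemma fformII_eq_smul_fformI (hx : ContDiffAt ℝ 2 x u)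
    (hind : LinearIndependent ℝ ![pd 0 x u, pd 1 x u])
    (hn : ∀ᶠ v in 𝓝 u, gaussMap x v = -(c • x v)) : fformII x u = c • fformI x u := by
  ext i j
  rw [fformII_eq_neg_pd_dotProduct_pd_gaussMap hx hind,
    pd_gaussMap_of_gaussMap_eq (hx.differentiableAt two_ne_zero) hn, dotProduct_neg,
    neg_neg, dotProduct_smul, dotProduct_comm, Matrix.smul_apply, fformI_apply]

lemma gaussCurv_of_fformII_eq_smul (hind : LinearIndependent ℝ ![pd 0 x u, pd 1 x u])
    (h : fformII x u = c • fformI x u) : gaussCurv x u = c ^ 2 := by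
  rw [gaussCurv, h, det_smul, Fintype.card_fin, mul_div_cancel_right₀ _ (det_fformI_pos hind).ne']

lemma pos_of_posDef_fformII_eq_smul (hpos : (fformII x u).PosDef)
    (h : fformII x u = c • fformI x u) : 0 < c := by
  have hdiag : 0 < c * norm3 (pd 0 x u) ^ 2 := by
    simpa [h, fformI_apply, norm3_sq] using hpos.diag_pos (i := 0)
  exact pos_of_mul_pos_left hdiag (sq_nonneg _)

lemma norm3_eq_inv_of_gaussMap_eq (hc : 0 < c)
    (hind : LinearIndependent ℝ ![pd 0 x u, pd 1 x u]) (hn : gaussMap x u = -(c • x u)) :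
    norm3 (x u) = c⁻¹ := by
  have hunit := gaussMap_dotProduct_self hind
  rw [hn, neg_dotProduct_neg, smul_dotProduct, dotProduct_smul, ← norm3_sq, smul_eq_mul,
    smul_eq_mul, ← mul_assoc, ← sq, ← mul_pow] at hunit
  refine eq_inv_of_mul_eq_one_right ?_
  exact (pow_eq_one_iff_of_nonneg (mul_nonneg hc.le (norm3_nonneg _)) two_ne_zero).1 hunit

lemma beltrami2_fformI_of_gaussMap_eq (hx : ContDiffAt ℝ 2 x u)
    (hind : LinearIndependent ℝ ![pd 0 x u, pd 1 x u])
    (hn : ∀ᶠ v in 𝓝 u, gaussMap x v = -(c • x v)) :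
    beltrami2 (fformI x) x u = -((2 * c) • gaussMap x u) := by
  have hpd := pd_gaussMap_of_gaussMap_eq (hx.differentiableAt two_ne_zero) hn
  have hcross : pd 1 x u ⨯₃ -(c • pd 0 x u) + -(c • pd 1 x u) ⨯₃ pd 0 x u =
      (2 * c) • (pd 0 x u ⨯₃ pd 1 x u) := by
    rw [← cross_anticomm (pd 1 x u)]
    simp only [map_neg, map_smul, LinearMap.neg_apply, LinearMap.smul_apply]
    module
  rw [beltrami2_fformI_self hx hind, hpd, hpd, hcross, smul_comm, gaussMap]

lemma beltrami2_fformII_of_gaussMap_eq (hx : ContDiffAt ℝ 2 x u) (hc : 0 < c)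
    (hind : LinearIndependent ℝ ![pd 0 x u, pd 1 x u])
    (hn : ∀ᶠ v in 𝓝 u, gaussMap x v = -(c • x v)) :
    beltrami2 (fformII x) x u = (2 * c) • x u := by
  have hII : fformII x =ᶠ[𝓝 u] fun v => c • fformI x v := by
    filter_upwards [hx.eventually (by simp), eventually_linearIndependent_pd hx hind,
      hn.eventually_nhds] with v hxv hindv hnv
    exact fformII_eq_smul_fformI hxv hindv hnv
  rw [beltrami2_congr_of_eventuallyEq hII, beltrami2_const_smul hc,
    beltrami2_fformI_of_gaussMap_eq hx hind hn, hn.self_of_nhds, ← smul_neg, neg_neg,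
    smul_comm (2 * c), inv_smul_smul₀ hc.ne']

lemma dotProduct_pd_of_norm3_const (hx : DifferentiableAt ℝ x u)
    (hnorm : ∀ᶠ v in 𝓝 u, norm3 (x v) = r) (i : Fin 2) : x u ⬝ᵥ pd i x u = 0 :=
  dotProduct_pd_self_of_eventually_const (c := r ^ 2) hx
    (hnorm.mono fun v hv => by rw [← norm3_sq, hv])

lemma dotProduct_pd_pd_of_norm3_const (hx : ContDiffAt ℝ 2 x u)
    (hnorm : ∀ᶠ v in 𝓝 u, norm3 (x v) = r) (i j : Fin 2) :
    x u ⬝ᵥ pd i (pd j x) u = -fformI x u i j := by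
  have horth : ∀ᶠ v in 𝓝 u, x v ⬝ᵥ pd j x v = 0 := by
    filter_upwards [hx.eventually (by simp), hnorm.eventually_nhds] with v hxv hv
    exact dotProduct_pd_of_norm3_const (hxv.differentiableAt two_ne_zero) hv j
  have h := pd_dotProduct_eq_neg_of_eventually_const (i := i) (hx.differentiableAt two_ne_zero)
    (differentiableAt_pd hx) horth
  rw [fformI_apply, h, neg_neg]

lemma gaussMap_eq_of_norm3_const (hx : ContDiffAt ℝ 2 x u)
    (hind : LinearIndependent ℝ ![pd 0 x u, pd 1 x u]) (hpos : (fformII x u).PosDef) (hr : 0 < r)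
    (hnorm : ∀ᶠ v in 𝓝 u, norm3 (x v) = r) : gaussMap x u = -(r⁻¹ • x u) := by
  have horth := dotProduct_pd_of_norm3_const (hx.differentiableAt two_ne_zero) hnorm
  obtain ⟨s, hs⟩ : ∃ s : ℝ, x u = s • gaussMap x u :=
    ⟨_, eq_dotProduct_smul_of_common_orthogonal hind (horth 0) (horth 1)
      (gaussMap_dotProduct_pd 0) (gaussMap_dotProduct_pd 1) (gaussMap_dotProduct_self hind)⟩
  have hsq : s ^ 2 = r ^ 2 := by
    rw [← hnorm.self_of_nhds, norm3_sq, hs, smul_dotProduct, dotProduct_smul,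
      gaussMap_dotProduct_self hind, smul_eq_mul, smul_eq_mul, mul_one, sq]
  have hdiag : s * fformII x u 0 0 = -norm3 (pd 0 x u) ^ 2 := by
    rw [norm3_sq, ← fformI_apply, ← dotProduct_pd_pd_of_norm3_const hx hnorm, hs, smul_dotProduct,
      dotProduct_comm, fformII_apply, smul_eq_mul]
  -- The definiteness of the second fundamental form selects the inward normal.
  have hs_nonpos : s ≤ 0 := by
    have hII : 0 < fformII x u 0 0 := hpos.diag_pos
    by_contra! hlt
    linarith [mul_pos hlt hII, sq_nonneg (norm3 (pd 0 x u))]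
  have hs_eq : s = -r := by
    rcases sq_eq_sq_iff_eq_or_eq_neg.1 hsq with h | h
    · linarith
    · exact h
  rw [hs, hs_eq, smul_smul, mul_neg, inv_mul_cancel₀ hr.ne', neg_smul, one_smul, neg_neg]

lemma gaussMap_eq_of_beltrami2_fformII_eq {lam : ℝ} {U : Set Param} (hU : IsOpen U)
    (hx : ContDiffOn ℝ 3 x U) (himm : Immersed x U) (hdet : ∀ v ∈ U, (fformII x v).det ≠ 0)
    (hlam : lam ≠ 0) (hb : ∀ v ∈ U, beltrami2 (fformII x) x v = lam • x v) (hu : u ∈ U) :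
    gaussMap x u = -((lam / 2) • x u) := by
  have hxU (v : Param) (hv : v ∈ U) : ContDiffAt ℝ 3 x v := hx.contDiffAt (hU.mem_nhds hv)
  have hsupport (v : Param) (hv : v ∈ U) : x v ⬝ᵥ gaussMap x v = -2 / lam := by
    rw [eq_div_iff hlam, mul_comm, ← smul_eq_mul, ← smul_dotProduct, ← hb v hv]
    exact beltrami2_fformII_dotProduct_gaussMap (hxU v hv) (himm v hv) (hdet v hv)
  have hparallel : x u = (-2 / lam) • gaussMap x u :=
    eq_smul_gaussMap_of_dotProduct_gaussMap_const ((hxU u hu).of_le (by norm_num)) (himm u hu)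
      (hdet u hu) (eventually_of_mem (hU.mem_nhds hu) hsupport)
  rw [hparallel, smul_smul, ← neg_smul, show -(lam / 2 * (-2 / lam)) = 1 by field_simp, one_smul]

end Sphere

section Characterization

variable {U : Set Param} {x : Param → Vec3}

lemma sphere_of_beltrami2_fformII_eq (hU : IsOpen U) (hne : U.Nonempty)
    (hx : ContDiffOn ℝ 3 x U) (himm : Immersed x U) (hell : ∀ u ∈ U, (fformII x u).PosDef)
    {lam : ℝ} (hlam : lam ≠ 0) (hb : ∀ u ∈ U, beltrami2 (fformII x) x u = lam • x u) :
    (∃ r : ℝ, 0 < r ∧ (∀ u ∈ U, norm3 (x u) = r) ∧ lam = 2 / r ∧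
      (∀ u ∈ U, gaussMap x u = -(r⁻¹ • x u))) ∧
    (∃ c : ℝ, ∀ u ∈ U, gaussCurv x u = c) := by
  have hn (u : Param) (hu : u ∈ U) : gaussMap x u = -((lam / 2) • x u) :=
    gaussMap_eq_of_beltrami2_fformII_eq hU hx himm (fun v hv => (hell v hv).det_pos.ne') hlam hb hu
  have hII (u : Param) (hu : u ∈ U) : fformII x u = (lam / 2) • fformI x u :=
    fformII_eq_smul_fformI ((hx.contDiffAt (hU.mem_nhds hu)).of_le (by norm_num)) (himm u hu)
      (eventually_of_mem (hU.mem_nhds hu) hn)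
  obtain ⟨u₀, hu₀⟩ := hne
  have hpos : 0 < lam / 2 := pos_of_posDef_fformII_eq_smul (hell u₀ hu₀) (hII u₀ hu₀)
  refine ⟨⟨(lam / 2)⁻¹, inv_pos.2 hpos, fun u hu =>
    norm3_eq_inv_of_gaussMap_eq hpos (himm u hu) (hn u hu), by field_simp, ?_⟩,
    (lam / 2) ^ 2, fun u hu => gaussCurv_of_fformII_eq_smul (himm u hu) (hII u hu)⟩
  rwa [inv_inv]

lemma beltrami2_fformII_eq_of_sphere (hU : IsOpen U) (hx : ContDiffOn ℝ 2 x U)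
    (himm : Immersed x U) (hell : ∀ u ∈ U, (fformII x u).PosDef) {r : ℝ} (hr : 0 < r)
    (hnorm : ∀ u ∈ U, norm3 (x u) = r) :
    ∀ u ∈ U, beltrami2 (fformII x) x u = (2 / r) • x u := by
  have hxU (u : Param) (hu : u ∈ U) : ContDiffAt ℝ 2 x u := hx.contDiffAt (hU.mem_nhds hu)
  have hn (u : Param) (hu : u ∈ U) : gaussMap x u = -(r⁻¹ • x u) :=
    gaussMap_eq_of_norm3_const (hxU u hu) (himm u hu) (hell u hu) hr
      (eventually_of_mem (hU.mem_nhds hu) hnorm)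
  intro u hu
  rw [beltrami2_fformII_of_gaussMap_eq (hxU u hu) (inv_pos.2 hr) (himm u hu)
    (eventually_of_mem (hU.mem_nhds hu) hn), div_eq_mul_inv]

end Characterization

theorem stmt11_general (U : Set Param) (x : Param → Vec3)
    (hU : IsOpen U) (hne : U.Nonempty)
    (hx : ContDiffOn ℝ 3 x U) (himm : Immersed x U)
    (hell : ∀ u ∈ U, (fformII x u).PosDef) :
    ((∃ lam : ℝ, lam ≠ 0 ∧ ∀ u ∈ U, beltrami2 (fformII x) x u = lam • x u) ↔
      (∃ r : ℝ, 0 < r ∧ ∀ u ∈ U, norm3 (x u) = r)) ∧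
    (∀ lam : ℝ, lam ≠ 0 → (∀ u ∈ U, beltrami2 (fformII x) x u = lam • x u) →
      (∃ r : ℝ, 0 < r ∧ (∀ u ∈ U, norm3 (x u) = r) ∧ lam = 2 / r ∧
        (∀ u ∈ U, gaussMap x u = -(r⁻¹ • x u))) ∧
      (∃ c : ℝ, ∀ u ∈ U, gaussCurv x u = c)) := by
  refine ⟨⟨?_, ?_⟩, fun lam => sphere_of_beltrami2_fformII_eq hU hne hx himm hell⟩
  · rintro ⟨lam, hlam, hb⟩
    obtain ⟨⟨r, hr, hnorm, -⟩, -⟩ := sphere_of_beltrami2_fformII_eq hU hne hx himm hell hlam hb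
    exact ⟨r, hr, hnorm⟩
  · rintro ⟨r, hr, hnorm⟩
    exact ⟨2 / r, (div_pos two_pos hr).ne',
      beltrami2_fformII_eq_of_sphere hU (hx.of_le (by norm_num)) himm hell hr hnorm⟩

/-- Theorem 2.1: `Δ^{II} x = λ x` on `U` for some `λ ≠ 0` iff `M` is part
of a sphere centered at the origin; moreover in that case necessarily `λ = 2/r`,
`n = −x/r`, and the Gauss curvature is constant on `U`. -/
theorem stmt11 (U : Set Param) (x : Param → Vec3)
    (hU : IsOpen U) (hUconn : IsConnected U)
    (hx : ContDiffOn ℝ (⊤ : ℕ∞) x U) (himm : Immersed x U)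
    (hell : ∀ u ∈ U, (fformII x u).PosDef) :
    ((∃ lam : ℝ, lam ≠ 0 ∧ ∀ u ∈ U, beltrami2 (fformII x) x u = lam • x u) ↔
      (∃ r : ℝ, 0 < r ∧ ∀ u ∈ U, norm3 (x u) = r)) ∧
    (∀ lam : ℝ, lam ≠ 0 → (∀ u ∈ U, beltrami2 (fformII x) x u = lam • x u) →
      (∃ r : ℝ, 0 < r ∧ (∀ u ∈ U, norm3 (x u) = r) ∧ lam = 2 / r ∧
        (∀ u ∈ U, gaussMap x u = -(r⁻¹ • x u))) ∧
      (∃ c : ℝ, ∀ u ∈ U, gaussCurv x u = c)) := by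
  exact stmt11_general U x hU hUconn.nonempty (contDiffOn_infty.1 hx 3) himm hell
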